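/- Let (A, μ, α, β) be a BiHom-associative algebra with α, β bijective, and let ψ, ω : A → A be linear maps with ψ(ab) = ψ(a)ψ(b) and ω(ab) = ω(a)ω(b) such that any two of α, β, ψ, ω commute. Let r, s ∈ A⊗A be α-, β-, ψ-, and ω-invariant, and define δ_r(a) = α⁻¹(a)▷r − r◁β⁻¹(a), δ_s(a) = α⁻¹(a)▷s − s◁β⁻¹(a), and Δ(a) = α⁻¹(a)▷r − s◁β⁻¹(a). Then δ_r and δ_s are BiHom-derivations, and Δ is a covariant BiHom-derivation with respect to (δ_r, δ_s), i.e., Δ(ab) = Δ(a)◁b + a▷δ_r(b) = a▷Δ(b) + δ_s(a)◁b for all a, b ∈ A. -/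

import Mathlib

open TensorProduct

section Defs

variable {K A : Type*} [Field K] [NonUnitalNonAssocRing A] [Module K A]
  [SMulCommClass K A A] [IsScalarTower K A A]

/-- The left action of `A` on `A⊗A`: `a ▷ (x⊗y) = ω(a)x ⊗ β(y)`. -/
noncomputable def lT2 (β ω : A →ₗ[K] A) (a : A) : A ⊗[K] A →ₗ[K] A ⊗[K] A :=
  TensorProduct.map (LinearMap.mulLeft K (ω a)) β

/-- The right action of `A` on `A⊗A`: `(x⊗y) ◁ a = α(x) ⊗ yψ(a)`. -/
noncomputable def rT2 (α ψ : A →ₗ[K] A) (a : A) : A ⊗[K] A →ₗ[K] A ⊗[K] A :=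
  TensorProduct.map α (LinearMap.mulRight K (ψ a))

/-- The left action, bundled as a linear map in the acting variable. -/
noncomputable def lT2hom (β ω : A →ₗ[K] A) : A →ₗ[K] (A ⊗[K] A →ₗ[K] A ⊗[K] A) :=
  TensorProduct.homTensorHomMap (.id K) A A A A ∘ₗ
    (TensorProduct.mk K (A →ₗ[K] A) (A →ₗ[K] A)).flip β ∘ₗ LinearMap.mul K A ∘ₗ ω

/-- The right action, bundled as a linear map in the acting variable. -/
noncomputable def rT2hom (α ψ : A →ₗ[K] A) : A →ₗ[K] (A ⊗[K] A →ₗ[K] A ⊗[K] A) :=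
  TensorProduct.homTensorHomMap (.id K) A A A A ∘ₗ
    TensorProduct.mk K (A →ₗ[K] A) (A →ₗ[K] A) α ∘ₗ (LinearMap.mul K A).flip ∘ₗ ψ

/-- `a ↦ α⁻¹(a) ▷ r − s ◁ β⁻¹(a)`, as a linear map `A → A⊗A`. -/
noncomputable def deltaOp (α β : A ≃ₗ[K] A) (ψ ω : A →ₗ[K] A) (r s : A ⊗[K] A) :
    A →ₗ[K] A ⊗[K] A :=
  (lT2hom β.toLinearMap ω).flip r ∘ₗ α.symm.toLinearMap -
    (rT2hom α.toLinearMap ψ).flip s ∘ₗ β.symm.toLinearMap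

end Defs

/-- Lemma 2.22 / Lemma 2.15 of the paper: in a
BiHom-associative algebra `(A, μ, α, β)` with `α, β` bijective, multiplicative
`ψ, ω`, all four maps pairwise commuting, and `α, β, ψ, ω`-invariant elements
`r, s ∈ A⊗A`, the maps `δ_r(a) = α⁻¹(a)▷r − r◁β⁻¹(a)` and
`δ_s(a) = α⁻¹(a)▷s − s◁β⁻¹(a)` are BiHom-derivations, and
`Δ(a) = α⁻¹(a)▷r − s◁β⁻¹(a)` is a covariant BiHom-derivation w.r.t. `(δ_r, δ_s)`. -/
theorem stmt11 {K A : Type*} [Field K] [NonUnitalNonAssocRing A] [Module K A]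
    [SMulCommClass K A A] [IsScalarTower K A A]
    (α β : A ≃ₗ[K] A) (ψ ω : A →ₗ[K] A) (r s : A ⊗[K] A)
    -- BiHom-associative algebra axioms for (A, ·, α, β)
    (hαmul : ∀ a b, α (a * b) = α a * α b)
    (hβmul : ∀ a b, β (a * b) = β a * β b)
    (hassoc : ∀ a b c, α a * (b * c) = (a * b) * β c)
    -- ψ, ω multiplicative
    (hψmul : ∀ a b, ψ (a * b) = ψ a * ψ b)
    (hωmul : ∀ a b, ω (a * b) = ω a * ω b)
    -- α, β, ψ, ω pairwise commute
    (hαβ : ∀ a, α (β a) = β (α a)) (hαψ : ∀ a, α (ψ a) = ψ (α a))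
    (hαω : ∀ a, α (ω a) = ω (α a)) (hβψ : ∀ a, β (ψ a) = ψ (β a))
    (hβω : ∀ a, β (ω a) = ω (β a)) (hψω : ∀ a, ψ (ω a) = ω (ψ a))
    -- r, s are α-, β-, ψ-, ω-invariant
    (hrα : TensorProduct.map α.toLinearMap α.toLinearMap r = r)
    (hrβ : TensorProduct.map β.toLinearMap β.toLinearMap r = r)
    (hrψ : TensorProduct.map ψ ψ r = r)
    (hrω : TensorProduct.map ω ω r = r)
    (hsα : TensorProduct.map α.toLinearMap α.toLinearMap s = s)
    (hsβ : TensorProduct.map β.toLinearMap β.toLinearMap s = s)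
    (hsψ : TensorProduct.map ψ ψ s = s)
    (hsω : TensorProduct.map ω ω s = s) :
    -- δ_r is a BiHom-derivation
    ((∀ a, TensorProduct.map α.toLinearMap α.toLinearMap (deltaOp α β ψ ω r r a) =
        deltaOp α β ψ ω r r (α a)) ∧
     (∀ a, TensorProduct.map β.toLinearMap β.toLinearMap (deltaOp α β ψ ω r r a) =
        deltaOp α β ψ ω r r (β a)) ∧
     (∀ a, TensorProduct.map ψ ψ (deltaOp α β ψ ω r r a) = deltaOp α β ψ ω r r (ψ a)) ∧
     (∀ a, TensorProduct.map ω ω (deltaOp α β ψ ω r r a) = deltaOp α β ψ ω r r (ω a)) ∧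
     (∀ a b, deltaOp α β ψ ω r r (a * b) =
        lT2 β.toLinearMap ω a (deltaOp α β ψ ω r r b) +
          rT2 α.toLinearMap ψ b (deltaOp α β ψ ω r r a))) ∧
    -- δ_s is a BiHom-derivation
    ((∀ a, TensorProduct.map α.toLinearMap α.toLinearMap (deltaOp α β ψ ω s s a) =
        deltaOp α β ψ ω s s (α a)) ∧
     (∀ a, TensorProduct.map β.toLinearMap β.toLinearMap (deltaOp α β ψ ω s s a) =
        deltaOp α β ψ ω s s (β a)) ∧
     (∀ a, TensorProduct.map ψ ψ (deltaOp α β ψ ω s s a) = deltaOp α β ψ ω s s (ψ a)) ∧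
     (∀ a, TensorProduct.map ω ω (deltaOp α β ψ ω s s a) = deltaOp α β ψ ω s s (ω a)) ∧
     (∀ a b, deltaOp α β ψ ω s s (a * b) =
        lT2 β.toLinearMap ω a (deltaOp α β ψ ω s s b) +
          rT2 α.toLinearMap ψ b (deltaOp α β ψ ω s s a))) ∧
    -- Δ is a covariant BiHom-derivation with respect to (δ_r, δ_s)
    (∀ a b, deltaOp α β ψ ω r s (a * b) =
      rT2 α.toLinearMap ψ b (deltaOp α β ψ ω r s a) +
        lT2 β.toLinearMap ω a (deltaOp α β ψ ω r r b)) ∧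
    (∀ a b, deltaOp α β ψ ω r s (a * b) =
      lT2 β.toLinearMap ω a (deltaOp α β ψ ω r s b) +
        rT2 α.toLinearMap ψ b (deltaOp α β ψ ω s s a)) := by
  have hd : ∀ (r s : A ⊗[K] A) (a : A), deltaOp α β ψ ω r s a =
      lT2 β.toLinearMap ω (α.symm a) r - rT2 α.toLinearMap ψ (β.symm a) s := fun r s a => rfl
  have hsα' : ∀ a b, α.symm (a * b) = α.symm a * α.symm b := fun a b => by
    apply α.injective; simp [hαmul]
  have hsβ' : ∀ a b, β.symm (a * b) = β.symm a * β.symm b := fun a b => by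
    apply β.injective; simp [hβmul]
  -- equivariance of the operator under any multiplicative map commuting with everything
  have key : ∀ (F : A →ₗ[K] A), (∀ a b, F (a * b) = F a * F b) → (∀ a, F (α a) = α (F a)) →
      (∀ a, F (β a) = β (F a)) → (∀ a, F (ψ a) = ψ (F a)) → (∀ a, F (ω a) = ω (F a)) →
      ∀ t : A ⊗[K] A, TensorProduct.map F F t = t → ∀ a,
      TensorProduct.map F F (deltaOp α β ψ ω t t a) = deltaOp α β ψ ω t t (F a) := by
    intro F hm h1 h2 h3 h4 t ht a
    have e1 : α.symm (F a) = F (α.symm a) := by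
      apply α.injective; simp [← h1]
    have e2 : β.symm (F a) = F (β.symm a) := by
      apply β.injective; simp [← h2]
    have hL : ∀ a, TensorProduct.map F F ∘ₗ lT2 β.toLinearMap ω a =
        lT2 β.toLinearMap ω (F a) ∘ₗ TensorProduct.map F F := by
      intro a
      apply TensorProduct.ext'
      intro x y
      simp [lT2, hm, h2, h4]
    have hR : ∀ a, TensorProduct.map F F ∘ₗ rT2 α.toLinearMap ψ a =
        rT2 α.toLinearMap ψ (F a) ∘ₗ TensorProduct.map F F := by
      intro a
      apply TensorProduct.ext'
      intro x y
      simp [rT2, hm, h1, h3]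
    have hL' := LinearMap.congr_fun (hL (α.symm a)) t
    have hR' := LinearMap.congr_fun (hR (β.symm a)) t
    simp only [LinearMap.comp_apply, ht] at hL' hR'
    rw [hd, hd, map_sub, hL', hR', e1, e2]
  have LL : ∀ t : A ⊗[K] A, TensorProduct.map β.toLinearMap β.toLinearMap t = t → ∀ a b,
      lT2 β.toLinearMap ω a (lT2 β.toLinearMap ω (α.symm b) t) =
        lT2 β.toLinearMap ω (α.symm (a * b)) t := by
    intro t ht a b
    have h : lT2 β.toLinearMap ω a ∘ₗ lT2 β.toLinearMap ω (α.symm b) =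
        lT2 β.toLinearMap ω (α.symm (a * b)) ∘ₗ
          TensorProduct.map β.toLinearMap β.toLinearMap := by
      apply TensorProduct.ext'
      intro x y
      have := hassoc (ω (α.symm a)) (ω (α.symm b)) x
      simp only [hαω, LinearEquiv.apply_symm_apply] at this
      simp [lT2, hsα', hωmul, this]
    have h' := LinearMap.congr_fun h t
    simpa only [LinearMap.comp_apply, ht] using h'
  have RR : ∀ t : A ⊗[K] A, TensorProduct.map α.toLinearMap α.toLinearMap t = t → ∀ a b,
      rT2 α.toLinearMap ψ b (rT2 α.toLinearMap ψ (β.symm a) t) =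
        rT2 α.toLinearMap ψ (β.symm (a * b)) t := by
    intro t ht a b
    have h : rT2 α.toLinearMap ψ b ∘ₗ rT2 α.toLinearMap ψ (β.symm a) =
        rT2 α.toLinearMap ψ (β.symm (a * b)) ∘ₗ
          TensorProduct.map α.toLinearMap α.toLinearMap := by
      apply TensorProduct.ext'
      intro x y
      have := hassoc y (ψ (β.symm a)) (ψ (β.symm b))
      simp only [hβψ, LinearEquiv.apply_symm_apply] at this
      simp [rT2, hsβ', hψmul, this]
    have h' := LinearMap.congr_fun h t
    simpa only [LinearMap.comp_apply, ht] using h'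
  have LR : ∀ (t : A ⊗[K] A) (a b : A),
      lT2 β.toLinearMap ω a (rT2 α.toLinearMap ψ (β.symm b) t) =
        rT2 α.toLinearMap ψ b (lT2 β.toLinearMap ω (α.symm a) t) := by
    intro t a b
    have h : lT2 β.toLinearMap ω a ∘ₗ rT2 α.toLinearMap ψ (β.symm b) =
        rT2 α.toLinearMap ψ b ∘ₗ lT2 β.toLinearMap ω (α.symm a) := by
      apply TensorProduct.ext'
      intro x y
      simp [lT2, rT2, hαmul, hβmul, hαω, hβψ]
    exact LinearMap.congr_fun h t
  have kα := key α.toLinearMap hαmul (fun _ => rfl) hαβ hαψ hαω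
  have kβ := key β.toLinearMap hβmul (fun a => (hαβ a).symm) (fun _ => rfl) hβψ hβω
  have kψ := key ψ hψmul (fun a => (hαψ a).symm) (fun a => (hβψ a).symm) (fun _ => rfl) hψω
  have kω := key ω hωmul (fun a => (hαω a).symm) (fun a => (hβω a).symm)
    (fun a => (hψω a).symm) (fun _ => rfl)
  refine ⟨⟨kα r hrα, kβ r hrβ, kψ r hrψ, kω r hrω, ?_⟩,
    ⟨kα s hsα, kβ s hsβ, kψ s hsψ, kω s hsω, ?_⟩, ?_, ?_⟩
  · intro a b
    simp only [hd, map_sub, LL r hrβ, RR r hrα, LR]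
    abel
  · intro a b
    simp only [hd, map_sub, LL s hsβ, RR s hsα, LR]
    abel
  · intro a b
    simp only [hd, map_sub, LL r hrβ, RR s hsα, LR]
    abel
  · intro a b
    simp only [hd, map_sub, LL r hrβ, RR s hsα, LR]
    abel
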